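/- Let 1 < q < ∞, let Ω ⊆ ℝⁿ be an open set, and let w, a be weights with w·a^ε ∈ L¹_loc(Ω) for all ε ∈ (0, q−1). If w ∈ A_q and a^δ ∈ A_q for some δ > 0, then L^{q)}_a(Ω,w) ⊂ L¹_loc(Ω), and for every measurable bounded set E ⊂ Ω there exists a constant C, independent of f, such that ∫_E |f(x)| dx ≤ C ‖f‖_{L^{q)}_a(Ω,w)} for all f ∈ L^{q)}_a(Ω,w). -/

import Mathlib

/-!
Hölder's inequality with exponent `p = q - ε` bounds `∫_E |f|` by `‖f‖_{L^{q)}_a(Ω,w)}` times a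
power of `∫_E (w a^ε)^{-1/(p-1)}`, so it suffices to find one `ε ∈ (0, q - 1)` for which this last
integral is finite on bounded sets (`exists_grandNorm_bound`). By Young's inequality
(`exists_small_exponent`) such an `ε` exists as soon as `w^{-τ}` and `a^{-ρ}` are locally integrable
for some `τ > 1/(q-1)` and some `ρ > 0`. The `A_q` condition by itself gives only `τ = 1/(q-1)`; the
point is the self-improvement of Muckenhoupt weights, i.e. that `σ = w^{-1/(q-1)}` has a locally
integrable power `1 + η` (`MemAq.exists_lintegral_rpow_lt_top`).

The self-improvement is proved by a Bellman function argument on dyadic cubes. Let `x` and `y` be the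
averages of `σ` and `w` over a cube. Hölder and the `A_q` condition give `1 ≤ y x^{q-1} ≤ C`. With
`κ = 2/(q-1)` and `η` small, the function `Φ(x, y) = x^{1+η} (2 - (y x^{q-1})^{-κ})` satisfies
`2^{-n} ∑ Φ(children) ≤ Φ(parent)` (`bellman_sum_le`): `x^{1+η}` is convex with constant `O(η)`, while
`x^{-(1-η)} y^{-κ}` is convex with a constant bounded below, uniformly because the average over a
child is at most `2^n` times that over the parent. Moreover `x^{1+η} ≤ Φ(x, y)`. Summing over the
generations bounds the integral of the `(1+η)`-th power of the dyadic averages of `σ`, uniformly in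
the generation (`lintegral_nest_le`), and Lebesgue differentiation with Fatou's lemma concludes.
-/

open MeasureTheory Metric Set ENNReal

/-- The weighted Lebesgue norm `‖f‖_{L^p(Ω,v)} = (∫_Ω |f|^p v dx)^{1/p}`. -/
noncomputable def wLqNorm {n : ℕ} (p : ℝ) (v : EuclideanSpace ℝ (Fin n) → ℝ)
    (Ω : Set (EuclideanSpace ℝ (Fin n))) (f : EuclideanSpace ℝ (Fin n) → ℝ) : ℝ≥0∞ :=
  (∫⁻ x in Ω, ENNReal.ofReal |f x| ^ p * ENNReal.ofReal (v x)) ^ (1 / p)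

/-- The generalized grand Lebesgue norm
`‖f‖_{L^{q)}_a(Ω,w)} = sup_{0<ε<q−1} (ε ∫_Ω |f|^{q−ε} w a^ε dx)^{1/(q−ε)}`. -/
noncomputable def grandNorm {n : ℕ} (q : ℝ) (w a : EuclideanSpace ℝ (Fin n) → ℝ)
    (Ω : Set (EuclideanSpace ℝ (Fin n))) (f : EuclideanSpace ℝ (Fin n) → ℝ) : ℝ≥0∞ :=
  ⨆ (ε : ℝ) (_ : ε ∈ Set.Ioo (0 : ℝ) (q - 1)),
    (ENNReal.ofReal ε *
      ∫⁻ x in Ω, ENNReal.ofReal |f x| ^ (q - ε) * ENNReal.ofReal (w x * a x ^ ε))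
        ^ (1 / (q - ε))

/-- The axis-parallel cube with center `c` and half edge-length `r`. -/
def axisCube {n : ℕ} (c : EuclideanSpace ℝ (Fin n)) (r : ℝ) :
    Set (EuclideanSpace ℝ (Fin n)) :=
  {x | ∀ i, |x i - c i| ≤ r}

/-- The Muckenhoupt class `A_q(ℝⁿ)`:
`sup_Q (fQ w) (fQ w^{−1/(q−1)})^{q−1} < ∞` over axis-parallel cubes `Q`. -/
def MemAq {n : ℕ} (q : ℝ) (w : EuclideanSpace ℝ (Fin n) → ℝ) : Prop :=
  ∃ C : ℝ≥0∞, C ≠ ⊤ ∧ ∀ (c : EuclideanSpace ℝ (Fin n)) (r : ℝ), 0 < r →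
    ((volume (axisCube c r))⁻¹ * ∫⁻ x in axisCube c r, ENNReal.ofReal (w x)) *
      ((volume (axisCube c r))⁻¹ *
        ∫⁻ x in axisCube c r, ENNReal.ofReal (w x ^ (-(1 / (q - 1))))) ^ (q - 1) ≤ C

/-! ### The Bellman function -/

/-- Quantitative convexity of `-log` at `1`, uniform on `(0, M]`. -/
theorem sub_one_sub_log_ge {a M : ℝ} (ha : 0 < a) (haM : a ≤ M) (hM : 1 ≤ M) :
    (a - 1) ^ 2 / (2 * M) ≤ a - 1 - Real.log a := by
  rcases le_total 1 a with h | h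
  -- `log a ≤ sinh (log a) = (a - a⁻¹) / 2`
  · have h1 : Real.log a ≤ (a - a⁻¹) / 2 := by
      rw [← Real.sinh_log ha]
      exact Real.self_le_sinh_iff.2 (Real.log_nonneg h)
    have h2 : (a - 1) ^ 2 / (2 * M) ≤ (a - 1) ^ 2 / (2 * a) := by gcongr
    have h3 : (a - 1) ^ 2 / (2 * a) = a - 1 - (a - a⁻¹) / 2 := by field_simp; ring
    linarith
  -- the first two terms of the series of `-log (1 - t)` at `t = 1 - a`
  · have h1 := Real.hasSum_pow_div_log_of_abs_lt_one (x := 1 - a)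
      (by rw [abs_lt]; constructor <;> linarith)
    have h2 := sum_le_hasSum (Finset.range 2)
      (fun i _ => div_nonneg (pow_nonneg (by linarith : (0 : ℝ) ≤ 1 - a) (i + 1))
        (by positivity)) h1
    norm_num [Finset.sum_range_succ] at h2
    have h3 : (a - 1) ^ 2 / (2 * M) ≤ (a - 1) ^ 2 / (2 * 1) := by gcongr
    nlinarith

theorem rpow_one_add_le {a η : ℝ} (ha : 0 < a) (h0 : 0 ≤ η) (h1 : η ≤ 1) :
    a ^ (1 + η) ≤ 1 + (1 + η) * (a - 1) + η * (a - 1) ^ 2 := by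
  have h := rpow_one_add_le_one_add_mul_self (s := a - 1) (by linarith) h0 h1
  rw [show 1 + (a - 1) = a by ring] at h
  rw [Real.rpow_add ha, Real.rpow_one]
  nlinarith

/-- Tangent plane bound at `(1, 1)` for the convex function `a^{-α} b^{-κ}`, with a quadratic gain in
the first variable on `a ≤ M`. -/
theorem rpow_mul_rpow_ge {a b α κ M : ℝ} (ha : 0 < a) (hb : 0 < b) (haM : a ≤ M) (hM : 1 ≤ M)
    (hα : 0 ≤ α) (hκ : 0 ≤ κ) :
    1 - α * (a - 1) - κ * (b - 1) + α * ((a - 1) ^ 2 / (2 * M)) ≤ a ^ (-α) * b ^ (-κ) := by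
  rw [Real.rpow_def_of_pos ha, Real.rpow_def_of_pos hb, ← Real.exp_add]
  have h1 := Real.add_one_le_exp (Real.log a * -α + Real.log b * -κ)
  have h2 := mul_le_mul_of_nonneg_left (sub_one_sub_log_ge ha haM hM) hα
  have h3 := mul_le_mul_of_nonneg_left (Real.log_le_sub_one_of_pos hb) hκ
  nlinarith

/-- The Bellman function `Φ(x, y) = x^{1+η} (2 - x^{-2} y^{-κ})`. For `κ = 2 / (q - 1)` the factor
`x^{-2} y^{-κ}` is `(y x^{q-1})^{-κ}`, a power of the `A_q` quantity. -/
noncomputable def bellman (η κ x y : ℝ) : ℝ := x ^ (1 + η) * (2 - x ^ (-2 : ℝ) * y ^ (-κ))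

/-- The function `bellman η κ` lies below an affine function touching it at `(X, Y)`: for small `η`
the quadratic error of `x^{1+η}` is absorbed by the quadratic gain of `rpow_mul_rpow_ge`. -/
theorem bellman_le {η κ c₀ M X Y x y : ℝ} (hη : 0 < η) (hη' : η ≤ 1 / 2) (hκ : 0 ≤ κ)
    (hX : 0 < X) (hY : 0 < Y) (hx : 0 < x) (hy : 0 < y) (hM : 1 ≤ M) (hxM : x ≤ M * X)
    (hc₀ : 0 ≤ c₀) (hη₀ : η ≤ c₀ / (8 * M)) (hc : c₀ ≤ X ^ (-2 : ℝ) * Y ^ (-κ)) :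
    bellman η κ x y ≤ bellman η κ X Y + X ^ (1 + η) *
      ((2 * (1 + η) + X ^ (-2 : ℝ) * Y ^ (-κ) * (1 - η)) * (x / X - 1) +
        X ^ (-2 : ℝ) * Y ^ (-κ) * κ * (y / Y - 1)) := by
  set c := X ^ (-2 : ℝ) * Y ^ (-κ) with hcdef
  have ha : 0 < x / X := by positivity
  have hb : 0 < y / Y := by positivity
  -- The rescaled form in `x / X` and `y / Y`, to which the one-variable bounds at `1` apply.
  have e : bellman η κ x y = X ^ (1 + η) *
      (2 * (x / X) ^ (1 + η) - c * ((x / X) ^ (-(1 - η)) * (y / Y) ^ (-κ))) := by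
    obtain ⟨a, rfl⟩ : ∃ a, x = a * X := ⟨x / X, by field_simp⟩
    obtain ⟨b, rfl⟩ : ∃ b, y = b * Y := ⟨y / Y, by field_simp⟩
    have ha' : a * X / X = a := by field_simp
    have hb' : b * Y / Y = b := by field_simp
    rw [ha'] at ha
    rw [hb'] at hb
    rw [ha', hb', bellman, hcdef, Real.mul_rpow ha.le hX.le, Real.mul_rpow ha.le hX.le,
      Real.mul_rpow hb.le hY.le, show -(1 - η) = (1 + η) + (-2 : ℝ) by ring,
      Real.rpow_add ha (1 + η) (-2)]
    ring
  have h1 := rpow_one_add_le ha hη.le (by linarith)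
  have h2 := rpow_mul_rpow_ge (α := 1 - η) (κ := κ) ha hb (by rwa [div_le_iff₀ hX]) hM
    (by linarith) hκ
  have hcpos : 0 ≤ c := hc₀.trans hc
  have h3 := mul_le_mul_of_nonneg_left h2 hcpos
  have h4 : 2 * η ≤ c * ((1 - η) / (2 * M)) := by
    have : c₀ * ((1 / 2) / (2 * M)) ≤ c * ((1 - η) / (2 * M)) := by
      gcongr
      linarith
    have h5 : c₀ / (8 * M) * 2 = c₀ * ((1 / 2) / (2 * M)) := by field_simp; norm_num
    linarith
  have h6 := mul_le_mul_of_nonneg_right h4 (sq_nonneg (x / X - 1))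
  have h7 : c * ((1 - η) / (2 * M)) * (x / X - 1) ^ 2
      = c * ((1 - η) * ((x / X - 1) ^ 2 / (2 * M))) := by ring
  have hXp : 0 ≤ X ^ (1 + η) := by positivity
  have h8 : bellman η κ X Y = X ^ (1 + η) * (2 - c) := rfl
  rw [e, h8, ← mul_add]
  apply mul_le_mul_of_nonneg_left _ hXp
  nlinarith

/-- Concavity of the Bellman function along dyadic splitting: if `(X, Y)` is the mean of the
`(x i, y i)`, the mean of the Bellman values is at most the Bellman value at `(X, Y)`. -/
theorem bellman_sum_le {ι : Type*} [Fintype ι] [Nonempty ι] {η κ c₀ X Y : ℝ} {x y : ι → ℝ}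
    (hη : 0 < η) (hη' : η ≤ 1 / 2) (hκ : 0 ≤ κ) (hX : 0 < X) (hY : 0 < Y)
    (hx : ∀ i, 0 < x i) (hy : ∀ i, 0 < y i)
    (hxX : ∑ i, x i = Fintype.card ι * X) (hyY : ∑ i, y i = Fintype.card ι * Y)
    (hc₀ : 0 ≤ c₀) (hη₀ : η ≤ c₀ / (8 * Fintype.card ι)) (hc : c₀ ≤ X ^ (-2 : ℝ) * Y ^ (-κ)) :
    ∑ i, bellman η κ (x i) (y i) ≤ Fintype.card ι * bellman η κ X Y := by
  have hM : (1 : ℝ) ≤ Fintype.card ι := by exact_mod_cast Fintype.card_pos (α := ι)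
  have key := Finset.sum_le_sum fun i (_ : i ∈ Finset.univ) =>
    bellman_le hη hη' hκ hX hY (hx i) (hy i) hM
      (hxX ▸ Finset.single_le_sum (fun j _ => (hx j).le) (Finset.mem_univ i)) hc₀ hη₀ hc
  refine key.trans (le_of_eq ?_)
  have h1 : ∑ i, (x i / X - 1) = 0 := by
    rw [Finset.sum_sub_distrib, ← Finset.sum_div, hxX]
    simp [hX.ne']
  have h2 : ∑ i, (y i / Y - 1) = 0 := by
    rw [Finset.sum_sub_distrib, ← Finset.sum_div, hyY]
    simp [hY.ne']
  rw [Finset.sum_add_distrib, ← Finset.mul_sum, Finset.sum_add_distrib, ← Finset.mul_sum,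
    ← Finset.mul_sum, h1, h2]
  simp

/-! ### Dyadic cubes -/

/-- The half-open cube with lower corner `c` and side `s`. -/
def cube {n : ℕ} (c : Fin n → ℝ) (s : ℝ) : Set (Fin n → ℝ) :=
  Set.univ.pi fun i => Set.Ico (c i) (c i + s)

/-- The lower corner of the dyadic child, of side `s / 2`, of `cube c s` selected by `e`: in the
directions `i` with `e i = true` it is the upper half. -/
noncomputable def childCorner {n : ℕ} (c : Fin n → ℝ) (s : ℝ) (e : Fin n → Bool) : Fin n → ℝ :=
  fun i => c i + if e i then s / 2 else 0

/-- The index `e` of the dyadic child of `cube c s` that contains a given point `x` of the cube. -/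
noncomputable def bits {n : ℕ} (c : Fin n → ℝ) (s : ℝ) (x : Fin n → ℝ) : Fin n → Bool :=
  fun i => decide (c i + s / 2 ≤ x i)

/-- The lower corner of the `N`-th generation dyadic subcube of `cube c s`, of side `s / 2 ^ N`, that
contains `x`; meaningful for `x ∈ cube c s`. -/
noncomputable def nest {n : ℕ} : ℕ → (Fin n → ℝ) → ℝ → (Fin n → ℝ) → (Fin n → ℝ)
  | 0, c, _, _ => c
  | N + 1, c, s, x => nest N (childCorner c s (bits c s x)) (s / 2) x

theorem measurableSet_cube {n : ℕ} (c : Fin n → ℝ) (s : ℝ) : MeasurableSet (cube c s) :=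
  MeasurableSet.univ_pi fun _ => measurableSet_Ico

theorem volume_cube {n : ℕ} (c : Fin n → ℝ) (s : ℝ) :
    volume (cube c s) = ENNReal.ofReal s ^ n := by
  simp [cube, Real.volume_pi_Ico]

theorem mem_cube_childCorner {n : ℕ} {c : Fin n → ℝ} {s : ℝ} (hs : 0 < s) {e : Fin n → Bool}
    {x : Fin n → ℝ} :
    x ∈ cube (childCorner c s e) (s / 2) ↔ x ∈ cube c s ∧ bits c s x = e := by
  simp only [cube, Set.mem_univ_pi, Set.mem_Ico, childCorner, bits, funext_iff, ← forall_and]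
  refine forall_congr' fun i => ?_
  cases e i <;> simp <;> grind

theorem lintegral_cube_eq_sum {n : ℕ} (c : Fin n → ℝ) {s : ℝ} (hs : 0 < s)
    (F : (Fin n → ℝ) → ℝ≥0∞) :
    ∫⁻ x in cube c s, F x = ∑ e, ∫⁻ x in cube (childCorner c s e) (s / 2), F x := by
  have h : cube c s = ⋃ e, cube (childCorner c s e) (s / 2) := by
    ext x
    simp [mem_cube_childCorner hs]
  rw [h, lintegral_iUnion (fun e => measurableSet_cube _ _), tsum_fintype]
  intro e e' hee
  refine Set.disjoint_left.2 fun x hx hx' => hee ?_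
  rw [mem_cube_childCorner hs] at hx hx'
  exact hx.2.symm.trans hx'.2

theorem mem_cube_nest {n : ℕ} (N : ℕ) : ∀ {c : Fin n → ℝ} {s : ℝ}, 0 < s → ∀ {x}, x ∈ cube c s →
    x ∈ cube (nest N c s x) (s / 2 ^ N) ∧ cube (nest N c s x) (s / 2 ^ N) ⊆ cube c s := by
  induction N with
  | zero => intro c s hs x hx; simpa [nest] using hx
  | succ N ih =>
    intro c s hs x hx
    have h := ih (half_pos hs) ((mem_cube_childCorner hs).2 ⟨hx, rfl⟩)
    rw [show s / 2 ^ (N + 1) = s / 2 / 2 ^ N by rw [pow_succ, div_div, mul_comm]]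
    exact ⟨h.1, h.2.trans fun y hy => ((mem_cube_childCorner hs).1 hy).1⟩

theorem measurable_bits {n : ℕ} (c : Fin n → ℝ) (s : ℝ) : Measurable (bits c s) := by
  refine measurable_pi_lambda _ fun i => ?_
  refine measurable_to_bool ?_
  simpa [bits, Set.preimage] using
    measurableSet_le (measurable_const (a := c i + s / 2)) (measurable_pi_apply i)

theorem measurable_comp_nest {n : ℕ} (N : ℕ) (A : (Fin n → ℝ) → ℝ → ℝ≥0∞) :
    ∀ (c : Fin n → ℝ) (s : ℝ), Measurable fun x => A (nest N c s x) (s / 2 ^ N) := by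
  induction N with
  | zero => intro c s; simp [nest]
  | succ N ih =>
    intro c s
    have h : Measurable fun p : (Fin n → Bool) × (Fin n → ℝ) =>
        A (nest N (childCorner c s p.1) (s / 2) p.2) (s / 2 / 2 ^ N) :=
      measurable_from_prod_countable_right fun e => ih (childCorner c s e) (s / 2)
    have h2 := h.comp ((measurable_bits c s).prodMk measurable_id)
    simpa [nest, Function.comp_def, pow_succ', div_div] using h2

/-- Iterating `bellman_sum_le` over `N` generations. Here `A c s` and `B c s` stand for the averages
of two functions over `cube c s`; the bound does not depend on `N`. -/
theorem lintegral_nest_le {n : ℕ} {η κ c₀ : ℝ} {A B : (Fin n → ℝ) → ℝ → ℝ}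
    (hη : 0 < η) (hη' : η ≤ 1 / 2) (hκ : 0 ≤ κ)
    (hA : ∀ c s, 0 < s → 0 < A c s) (hB : ∀ c s, 0 < s → 0 < B c s)
    (hAadd : ∀ c s, 0 < s → ∑ e, A (childCorner c s e) (s / 2) = 2 ^ n * A c s)
    (hBadd : ∀ c s, 0 < s → ∑ e, B (childCorner c s e) (s / 2) = 2 ^ n * B c s)
    (hc₀ : 0 ≤ c₀) (hη₀ : η ≤ c₀ / (8 * 2 ^ n))
    (hlow : ∀ c s, 0 < s → c₀ ≤ A c s ^ (-2 : ℝ) * B c s ^ (-κ))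
    (hup : ∀ c s, 0 < s → A c s ^ (-2 : ℝ) * B c s ^ (-κ) ≤ 1) (N : ℕ) :
    ∀ (c : Fin n → ℝ) (s : ℝ), 0 < s →
      ∫⁻ x in cube c s, ENNReal.ofReal (A (nest N c s x) (s / 2 ^ N) ^ (1 + η)) ≤
        ENNReal.ofReal (s ^ n * bellman η κ (A c s) (B c s)) := by
  induction N with
  | zero =>
    intro c s hs
    simp only [nest, pow_zero, div_one, setLIntegral_const, volume_cube]
    rw [← ENNReal.ofReal_pow hs.le, ← ENNReal.ofReal_mul (by have := hA c s hs; positivity),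
      mul_comm]
    apply ENNReal.ofReal_le_ofReal
    apply mul_le_mul_of_nonneg_left _ (by positivity)
    have := hup c s hs
    exact le_mul_of_one_le_right (by have := hA c s hs; positivity) (by linarith)
  | succ N ih =>
    intro c s hs
    have hnn : ∀ c s, 0 < s → 0 ≤ bellman η κ (A c s) (B c s) := fun c s hs => by
      have := hup c s hs
      have := hA c s hs
      exact mul_nonneg (by positivity) (by linarith)
    rw [lintegral_cube_eq_sum c hs]
    calc _ ≤ ∑ e, ENNReal.ofReal ((s / 2) ^ n *
              bellman η κ (A (childCorner c s e) (s / 2)) (B (childCorner c s e) (s / 2))) := by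
          refine Finset.sum_le_sum fun e _ => ?_
          refine le_trans (le_of_eq ?_) (ih (childCorner c s e) (s / 2) (half_pos hs))
          refine setLIntegral_congr_fun (measurableSet_cube _ _) fun x hx => ?_
          simp only [nest, ((mem_cube_childCorner hs).1 hx).2, pow_succ', div_div]
      _ = ENNReal.ofReal ((s / 2) ^ n * ∑ e,
              bellman η κ (A (childCorner c s e) (s / 2)) (B (childCorner c s e) (s / 2))) := by
          rw [Finset.mul_sum, ENNReal.ofReal_sum_of_nonneg]
          intro e _
          exact mul_nonneg (by positivity) (hnn _ _ (half_pos hs))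
      _ ≤ ENNReal.ofReal ((s / 2) ^ n * (2 ^ n * bellman η κ (A c s) (B c s))) := by
          apply ENNReal.ofReal_le_ofReal
          apply mul_le_mul_of_nonneg_left _ (by positivity)
          have hcard : ((Fintype.card (Fin n → Bool) : ℕ) : ℝ) = 2 ^ n := by simp
          have := bellman_sum_le (ι := Fin n → Bool) hη hη' hκ (hA c s hs) (hB c s hs)
            (fun e => hA (childCorner c s e) _ (half_pos hs))
            (fun e => hB (childCorner c s e) _ (half_pos hs))
            (by rw [hcard]; exact hAadd c s hs) (by rw [hcard]; exact hBadd c s hs) hc₀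
            (by rw [hcard]; exact hη₀) (hlow c s hs)
          rwa [hcard] at this
      _ = _ := by rw [← mul_assoc, ← mul_pow, div_mul_cancel₀ _ two_ne_zero]

/-! ### Self-improvement of Muckenhoupt weights -/

theorem cube_ae_eq_closedBall {n : ℕ} (c : Fin n → ℝ) {s : ℝ} (hs : 0 < s) :
    (cube c s : Set (Fin n → ℝ)) =ᵐ[volume] closedBall (fun i => c i + s / 2) (s / 2) := by
  have h : closedBall (fun i => c i + s / 2) (s / 2) = Set.Icc c (fun i => c i + s) := by
    rw [closedBall_pi _ (half_pos hs).le, ← Set.pi_univ_Icc]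
    simp only [Real.closedBall_eq_Icc, add_sub_cancel_right, add_assoc, add_halves]
  rw [h]
  exact Measure.univ_pi_Ico_ae_eq_Icc

/-- Lebesgue differentiation along dyadic subcubes, which up to null sets are closed sup-norm balls
containing the point. -/
theorem ae_tendsto_nest {n : ℕ} {σ : (Fin n → ℝ) → ℝ≥0∞} (hσ : Measurable σ)
    (c : Fin n → ℝ) {s : ℝ} (hs : 0 < s) (hfin : ∫⁻ x in cube c s, σ x ≠ ⊤) :
    ∀ᵐ x ∂volume.restrict (cube c s), Filter.Tendsto (fun N : ℕ =>
      (∫⁻ y in cube (nest N c s x) (s / 2 ^ N), σ y) / volume (cube (nest N c s x) (s / 2 ^ N)))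
      Filter.atTop (nhds (σ x)) := by
  rw [ae_restrict_iff' (measurableSet_cube c s)]
  have hF : ∫⁻ x, (cube c s).indicator σ x ≠ ⊤ := by
    rwa [lintegral_indicator (measurableSet_cube c s)]
  filter_upwards [VitaliFamily.ae_tendsto_lintegral_div
    (IsUnifLocDoublingMeasure.vitaliFamily (volume : Measure (Fin n → ℝ)) 1)
    (hσ.indicator (measurableSet_cube c s)).aemeasurable hF] with x hx hxc
  have hδ : Filter.Tendsto (fun N : ℕ => s / 2 ^ N / 2) Filter.atTop (nhdsWithin 0 (Set.Ioi 0)) := by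
    rw [tendsto_nhdsWithin_iff]
    refine ⟨?_, Filter.Eventually.of_forall fun N => by simp only [Set.mem_Ioi]; positivity⟩
    have := (tendsto_pow_atTop_nhds_zero_of_lt_one (r := (1 / 2 : ℝ)) (by norm_num)
      (by norm_num)).const_mul (s / 2)
    simp only [mul_zero] at this
    refine this.congr fun N => ?_
    rw [one_div, inv_pow]
    ring
  have key := hx.comp (IsUnifLocDoublingMeasure.tendsto_closedBall_filterAt (μ := volume) (K := 1)
    (x := x) (fun N i => nest N c s x i + s / 2 ^ N / 2) (fun N => s / 2 ^ N / 2) hδ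
    (Filter.Eventually.of_forall fun N => by
      have h := (mem_cube_nest N hs hxc).1
      rw [one_mul, mem_closedBall, dist_pi_le_iff (by positivity)]
      intro i
      have hi := h i (Set.mem_univ i)
      rw [Real.dist_eq, abs_le]
      constructor <;> linarith [hi.1, hi.2]))
  rw [Set.indicator_of_mem hxc] at key
  refine key.congr fun N => ?_
  have hae := cube_ae_eq_closedBall (nest N c s x) (s := s / 2 ^ N) (by positivity)
  simp only [Function.comp_apply]
  rw [← measure_congr hae, ← setLIntegral_congr hae]
  congr 1
  exact setLIntegral_congr_fun (measurableSet_cube _ _) fun y hy =>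
    Set.indicator_of_mem ((mem_cube_nest N hs hxc).2 hy) σ

/-- Hölder's inequality for the normalized measure on `S`: the `A_q` quantity is at least `1`. -/
theorem one_le_avg_mul_avg {α : Type*} [MeasurableSpace α] {μ : Measure α}
    {S : Set α} (h0 : μ S ≠ 0) (hT : μ S ≠ ⊤) {q : ℝ} (hq : 1 < q) {σ ω : α → ℝ≥0∞}
    (hσ : Measurable σ) (hω : Measurable ω) (h1 : ∀ᵐ x ∂μ, 1 ≤ ω x * σ x ^ (q - 1)) :
    1 ≤ ((μ S)⁻¹ * ∫⁻ x in S, ω x ∂μ) * ((μ S)⁻¹ * ∫⁻ x in S, σ x ∂μ) ^ (q - 1) := by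
  have hq0 : 0 < q := by linarith
  have hpq : q.HolderConjugate (q / (q - 1)) := Real.HolderConjugate.conjExponent hq
  set ν : Measure α := (μ S)⁻¹ • μ.restrict S with hν
  have hint : ∀ f : α → ℝ≥0∞, (μ S)⁻¹ * ∫⁻ x in S, f x ∂μ = ∫⁻ x, f x ∂ν := fun f => by
    rw [hν, lintegral_smul_measure, smul_eq_mul]
  have hν1 : ∫⁻ _, (1 : ℝ≥0∞) ∂ν = 1 := by
    rw [← hint, setLIntegral_one, ENNReal.inv_mul_cancel h0 hT]
  have hae : ∀ᵐ x ∂ν, (1 : ℝ≥0∞) ≤ ω x ^ (1 / q) * σ x ^ ((q - 1) / q) := by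
    refine Measure.ae_smul_measure ?_ _
    filter_upwards [ae_restrict_of_ae h1] with x hx
    have := ENNReal.rpow_le_rpow hx (z := 1 / q) (by positivity)
    rwa [ENNReal.one_rpow, ENNReal.mul_rpow_of_nonneg _ _ (by positivity), ← ENNReal.rpow_mul,
      mul_one_div] at this
  have hold := ENNReal.lintegral_mul_le_Lp_mul_Lq ν hpq
    (f := fun x => ω x ^ (1 / q)) (g := fun x => σ x ^ ((q - 1) / q))
    (hω.pow_const _).aemeasurable (hσ.pow_const _).aemeasurable
  have hq1 : q - 1 ≠ 0 := by linarith
  have e1 : (q - 1) / q * (q / (q - 1)) = 1 := by field_simp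
  have e2 : 1 / q * q = 1 := by field_simp
  simp only [Pi.mul_apply, ← ENNReal.rpow_mul, e1, e2, ENNReal.rpow_one] at hold
  have h2 : 1 ≤ (∫⁻ x, ω x ∂ν) ^ (1 / q) * (∫⁻ x, σ x ∂ν) ^ (1 / (q / (q - 1))) := by
    refine le_trans ?_ hold
    rw [← hν1]
    exact lintegral_mono_ae hae
  have h3 := ENNReal.rpow_le_rpow h2 hq0.le
  have e3 : 1 / (q / (q - 1)) * q = q - 1 := by field_simp
  rw [ENNReal.one_rpow, ENNReal.mul_rpow_of_nonneg _ _ hq0.le, ← ENNReal.rpow_mul,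
    ← ENNReal.rpow_mul, e2, e3, ENNReal.rpow_one] at h3
  rwa [hint, hint]

theorem volume_cube_ne_zero {n : ℕ} (c : Fin n → ℝ) {s : ℝ} (hs : 0 < s) :
    volume (cube c s) ≠ 0 := by
  rw [volume_cube]
  exact pow_ne_zero _ (by simpa using hs)

theorem volume_cube_ne_top {n : ℕ} (c : Fin n → ℝ) (s : ℝ) :
    volume (cube c s) ≠ ⊤ := by
  rw [volume_cube]
  exact ENNReal.pow_ne_top ENNReal.ofReal_ne_top

/-- Finiteness of the `A_q` product makes both factors finite: as neither factor vanishes, the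
convention `0 * ∞ = 0` does not interfere. -/
theorem setLIntegral_ne_top_of_avg_mul_le {α : Type*} [MeasurableSpace α] {μ : Measure α}
    {S : Set α} (h0 : μ S ≠ 0) (hT : μ S ≠ ⊤) {q : ℝ} (hq : 1 < q) {σ ω : α → ℝ≥0∞}
    (hσ : Measurable σ) (hω : Measurable ω) (hσ0 : ∀ᵐ x ∂μ, σ x ≠ 0) (hω0 : ∀ᵐ x ∂μ, ω x ≠ 0)
    (h : ((μ S)⁻¹ * ∫⁻ x in S, ω x ∂μ) * ((μ S)⁻¹ * ∫⁻ x in S, σ x ∂μ) ^ (q - 1) ≠ ⊤) :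
    ((∫⁻ x in S, ω x ∂μ) ≠ 0 ∧ (∫⁻ x in S, ω x ∂μ) ≠ ⊤) ∧
      ((∫⁻ x in S, σ x ∂μ) ≠ 0 ∧ (∫⁻ x in S, σ x ∂μ) ≠ ⊤) := by
  have hne : ∀ f : α → ℝ≥0∞, Measurable f → (∀ᵐ x ∂μ, f x ≠ 0) → (∫⁻ x in S, f x ∂μ) ≠ 0 := by
    intro f hf hf0 hzero
    rw [lintegral_eq_zero_iff hf] at hzero
    have : ∀ᵐ x ∂μ.restrict S, False := by
      filter_upwards [hzero, ae_restrict_of_ae hf0] with x h1 h2 using h2 h1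
    rw [Filter.eventually_false_iff_eq_bot, ae_eq_bot, Measure.restrict_eq_zero] at this
    exact h0 this
  have hω1 := hne ω hω hω0
  have hσ1 := hne σ hσ hσ0
  have hi0 : (μ S)⁻¹ ≠ 0 := ENNReal.inv_ne_zero.2 hT
  have hq1 : 0 < q - 1 := by linarith
  refine ⟨⟨hω1, fun htop => h ?_⟩, hσ1, fun htop => h ?_⟩
  · rw [htop, ENNReal.mul_top hi0, ENNReal.top_mul]
    rw [Ne, ENNReal.rpow_eq_zero_iff_of_pos hq1]
    exact mul_ne_zero hi0 hσ1
  · rw [htop, ENNReal.mul_top hi0, ENNReal.top_rpow_of_pos hq1, ENNReal.mul_top]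
    exact mul_ne_zero hi0 hω1

/-- The average of `f` over `cube c s` as a real number (`0` if the integral is infinite). -/
noncomputable def cubeAvg {n : ℕ} (f : (Fin n → ℝ) → ℝ≥0∞) (c : Fin n → ℝ) (s : ℝ) : ℝ :=
  ((volume (cube c s))⁻¹ * ∫⁻ x in cube c s, f x).toReal

theorem sum_cubeAvg {n : ℕ} {f : (Fin n → ℝ) → ℝ≥0∞} {c : Fin n → ℝ} {s : ℝ} (hs : 0 < s)
    (hfin : ∀ c s, 0 < s → ∫⁻ x in cube c s, f x ≠ ⊤) :
    ∑ e, cubeAvg f (childCorner c s e) (s / 2) = 2 ^ n * cubeAvg f c s := by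
  have h : ∀ c s, 0 < s → cubeAvg f c s = (s ^ n)⁻¹ * (∫⁻ x in cube c s, f x).toReal := by
    intro c s hs
    rw [cubeAvg, volume_cube, ENNReal.toReal_mul, ENNReal.toReal_inv, ENNReal.toReal_pow,
      ENNReal.toReal_ofReal hs.le]
  simp only [h _ _ hs, h _ _ (half_pos hs)]
  rw [← Finset.mul_sum, ← ENNReal.toReal_sum (fun e _ => hfin _ _ (half_pos hs)),
    ← lintegral_cube_eq_sum c hs, div_pow, inv_div, ← mul_assoc, div_eq_mul_inv]

/-- Self-improvement of the dual weight `σ` of an `A_q` pair `(ω, σ)`, `ω σ^{q-1} ≥ 1`: some power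
`1 + η > 1` of `σ` is integrable on every cube. -/
theorem exists_lintegral_rpow_lt_top {n : ℕ} {q : ℝ} (hq : 1 < q) {σ ω : (Fin n → ℝ) → ℝ≥0∞}
    (hσ : Measurable σ) (hω : Measurable ω) (hσ0 : ∀ᵐ x, σ x ≠ 0) (hω0 : ∀ᵐ x, ω x ≠ 0)
    (h1 : ∀ᵐ x, 1 ≤ ω x * σ x ^ (q - 1)) {C : ℝ≥0∞} (hC : C ≠ ⊤)
    (hA : ∀ c s, 0 < s → ((volume (cube c s))⁻¹ * ∫⁻ x in cube c s, ω x) *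
      ((volume (cube c s))⁻¹ * ∫⁻ x in cube c s, σ x) ^ (q - 1) ≤ C) :
    ∃ η : ℝ, 0 < η ∧ ∀ (c : Fin n → ℝ) (s : ℝ), 0 < s →
      ∫⁻ x in cube c s, σ x ^ (1 + η) < ⊤ := by
  have hq1 : 0 < q - 1 := by linarith
  have hfin := fun c s (hs : 0 < s) => setLIntegral_ne_top_of_avg_mul_le
    (volume_cube_ne_zero c hs) (volume_cube_ne_top c s) hq hσ hω hσ0 hω0
    (ne_top_of_le_ne_top hC (hA c s hs))
  have hpos : ∀ f : (Fin n → ℝ) → ℝ≥0∞, ∀ c s, 0 < s →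
      (∫⁻ x in cube c s, f x) ≠ 0 → (∫⁻ x in cube c s, f x) ≠ ⊤ → 0 < cubeAvg f c s := by
    intro f c s hs h0 hT
    exact ENNReal.toReal_pos (mul_ne_zero (ENNReal.inv_ne_zero.2 (volume_cube_ne_top c s)) h0)
      (ENNReal.mul_ne_top (ENNReal.inv_ne_top.2 (volume_cube_ne_zero c hs)) hT)
  have hAp := fun c s hs => hpos σ c s hs (hfin c s hs).2.1 (hfin c s hs).2.2
  have hBp := fun c s hs => hpos ω c s hs (hfin c s hs).1.1 (hfin c s hs).1.2
  have hU : ∀ c s, 0 < s → 1 ≤ cubeAvg ω c s * cubeAvg σ c s ^ (q - 1) ∧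
      cubeAvg ω c s * cubeAvg σ c s ^ (q - 1) ≤ C.toReal := by
    intro c s hs
    rw [cubeAvg, cubeAvg, ENNReal.toReal_rpow, ← ENNReal.toReal_mul]
    have hle := hA c s hs
    refine ⟨?_, ENNReal.toReal_mono hC hle⟩
    rw [← ENNReal.toReal_one]
    exact ENNReal.toReal_mono (ne_top_of_le_ne_top hC hle)
      (one_le_avg_mul_avg (volume_cube_ne_zero c hs) (volume_cube_ne_top c s) hq hσ hω h1)
  have hC1 : 1 ≤ C.toReal := (hU 0 1 one_pos).1.trans (hU 0 1 one_pos).2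
  set κ : ℝ := 2 / (q - 1) with hκdef
  have hκ : 0 < κ := by positivity
  set c₀ : ℝ := C.toReal ^ (-κ) with hc₀def
  have hc₀ : 0 < c₀ := by positivity
  -- The choice of `κ` turns the Bellman factor into a power of the `A_q` quantity.
  have hUe : ∀ c s, 0 < s → cubeAvg σ c s ^ (-2 : ℝ) * cubeAvg ω c s ^ (-κ) =
      (cubeAvg ω c s * cubeAvg σ c s ^ (q - 1)) ^ (-κ) := by
    intro c s hs
    have ha := hAp c s hs
    have hb := hBp c s hs
    rw [Real.mul_rpow hb.le (by positivity), ← Real.rpow_mul ha.le, mul_comm,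
      show (q - 1) * -κ = -2 by rw [hκdef]; field_simp]
  set η : ℝ := min (1 / 2) (c₀ / (8 * 2 ^ n)) with hηdef
  have hη : 0 < η := by positivity
  refine ⟨η, hη, fun c s hs => ?_⟩
  have hbound := fun N => lintegral_nest_le hη (min_le_left _ _) hκ.le hAp hBp
    (fun c s hs => sum_cubeAvg hs fun c s hs => (hfin c s hs).2.2)
    (fun c s hs => sum_cubeAvg hs fun c s hs => (hfin c s hs).1.2)
    hc₀.le (min_le_right _ _)
    (fun c s hs => by
      rw [hUe c s hs]
      exact Real.rpow_le_rpow_of_nonpos (by linarith [(hU c s hs).1]) (hU c s hs).2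
        (by linarith))
    (fun c s hs => by
      rw [hUe c s hs]
      exact Real.rpow_le_one_of_one_le_of_nonpos (hU c s hs).1 (by linarith)) N c s hs
  calc ∫⁻ x in cube c s, σ x ^ (1 + η)
      ≤ ∫⁻ x in cube c s, Filter.liminf (fun N : ℕ => ENNReal.ofReal
          (cubeAvg σ (nest N c s x) (s / 2 ^ N) ^ (1 + η))) Filter.atTop := by
        refine lintegral_mono_ae ?_
        filter_upwards [ae_tendsto_nest hσ c hs (hfin c s hs).2.2] with x hx
        have h2 := hx.ennrpow_const (1 + η)
        refine le_of_eq (Filter.Tendsto.liminf_eq (h2.congr fun N => ?_)).symm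
        have hsN : 0 < s / 2 ^ N := by positivity
        rw [← ENNReal.ofReal_rpow_of_nonneg (hAp _ _ hsN).le (by positivity), cubeAvg,
          ENNReal.ofReal_toReal, mul_comm, div_eq_mul_inv]
        exact ENNReal.mul_ne_top (ENNReal.inv_ne_top.2 (volume_cube_ne_zero _ hsN))
          (hfin _ _ hsN).2.2
    _ ≤ Filter.liminf (fun N : ℕ => ∫⁻ x in cube c s, ENNReal.ofReal
          (cubeAvg σ (nest N c s x) (s / 2 ^ N) ^ (1 + η))) Filter.atTop :=
        lintegral_liminf_le fun N => measurable_comp_nest N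
          (fun c s => ENNReal.ofReal (cubeAvg σ c s ^ (1 + η))) c s
    _ ≤ ENNReal.ofReal (s ^ n * bellman η κ (cubeAvg σ c s) (cubeAvg ω c s)) :=
        Filter.liminf_le_of_le (by isBoundedDefault) fun b hb => by
          obtain ⟨N, hN⟩ := hb.exists
          exact hN.trans (hbound N)
    _ < ⊤ := ENNReal.ofReal_lt_top

/-! ### Transfer to Euclidean space and grand Lebesgue spaces -/

theorem measurableSet_axisCube {n : ℕ} (c : EuclideanSpace ℝ (Fin n)) (r : ℝ) :
    MeasurableSet (axisCube c r) := by
  have : axisCube c r = ⋂ i, {x : EuclideanSpace ℝ (Fin n) | |x i - c i| ≤ r} := by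
    ext x
    simp [axisCube]
  rw [this]
  refine MeasurableSet.iInter fun i => measurableSet_le ?_ measurable_const
  have : Measurable fun x : EuclideanSpace ℝ (Fin n) => x i := by fun_prop
  exact continuous_abs.measurable.comp (this.sub_const _)

theorem preimage_axisCube_ae_eq {n : ℕ} (c : Fin n → ℝ) {s : ℝ} (hs : 0 < s) :
    (WithLp.toLp 2 ⁻¹' axisCube (WithLp.toLp 2 fun i => c i + s / 2) (s / 2) : Set (Fin n → ℝ))
      =ᵐ[volume] cube c s := by
  refine Filter.EventuallyEq.trans (Filter.EventuallyEq.of_eq ?_) (cube_ae_eq_closedBall c hs).symm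
  rw [closedBall_pi _ (half_pos hs).le]
  ext x
  change (∀ i, |x i - (c i + s / 2)| ≤ s / 2) ↔ x ∈ Set.univ.pi _
  simp [Real.dist_eq]

/-- Integrals over closed axis-parallel cubes of `EuclideanSpace` as integrals over half-open cubes
of `Fin n → ℝ`. -/
theorem setLIntegral_axisCube {n : ℕ} (c : Fin n → ℝ) {s : ℝ} (hs : 0 < s)
    (f : EuclideanSpace ℝ (Fin n) → ℝ≥0∞) :
    ∫⁻ x in axisCube (WithLp.toLp 2 fun i => c i + s / 2) (s / 2), f x =
      ∫⁻ x in cube c s, f (WithLp.toLp 2 x) := by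
  rw [← setLIntegral_congr (preimage_axisCube_ae_eq c hs)]
  exact ((PiLp.volume_preserving_toLp (Fin n)).setLIntegral_comp_preimage_emb
    (MeasurableEquiv.toLp 2 (Fin n → ℝ)).measurableEmbedding f _).symm

theorem volume_axisCube {n : ℕ} (c : Fin n → ℝ) {s : ℝ} (hs : 0 < s) :
    volume (axisCube (WithLp.toLp 2 fun i => c i + s / 2) (s / 2)) = volume (cube c s) := by
  simpa using setLIntegral_axisCube c hs fun _ => 1

/-- Self-improvement of `A_q` weights: `w^{-τ}` is locally integrable for some `τ` strictly larger
than the exponent `1 / (q - 1)` of the definition. -/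
theorem MemAq.exists_lintegral_rpow_lt_top {n : ℕ} {q : ℝ} (hq : 1 < q)
    {w : EuclideanSpace ℝ (Fin n) → ℝ} (hw_meas : Measurable w)
    (hw_pos : ∀ᵐ x ∂volume, 0 < w x) (hw : MemAq q w) :
    ∃ τ : ℝ, 1 / (q - 1) < τ ∧ ∀ R : ℝ, 0 < R →
      ∫⁻ x in closedBall 0 R, ENNReal.ofReal (w x ^ (-τ)) < ⊤ := by
  obtain ⟨C, hC, hA⟩ := hw
  have hq1 : 0 < q - 1 := by linarith
  have hmp := PiLp.volume_preserving_toLp (Fin n)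
  have hpos : ∀ᵐ x : Fin n → ℝ, 0 < w (WithLp.toLp 2 x) := hmp.quasiMeasurePreserving.ae hw_pos
  obtain ⟨η, hη, h⟩ := _root_.exists_lintegral_rpow_lt_top hq
    (σ := fun x => ENNReal.ofReal (w (WithLp.toLp 2 x) ^ (-(1 / (q - 1)))))
    (ω := fun x => ENNReal.ofReal (w (WithLp.toLp 2 x)))
    ((hw_meas.comp hmp.measurable).pow_const _).ennreal_ofReal
    (hw_meas.comp hmp.measurable).ennreal_ofReal
    (by
      filter_upwards [hpos] with x hx
      exact (ENNReal.ofReal_pos.2 (Real.rpow_pos_of_pos hx _)).ne')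
    (by
      filter_upwards [hpos] with x hx
      exact (ENNReal.ofReal_pos.2 hx).ne')
    (by
      filter_upwards [hpos] with x hx
      rw [ENNReal.ofReal_rpow_of_nonneg (Real.rpow_nonneg hx.le _) hq1.le,
        ← ENNReal.ofReal_mul hx.le, ← Real.rpow_mul hx.le,
        show -(1 / (q - 1)) * (q - 1) = -1 by field_simp, Real.rpow_neg_one,
        mul_inv_cancel₀ hx.ne', ENNReal.ofReal_one])
    hC (fun c s hs => by
      have := hA (WithLp.toLp 2 fun i => c i + s / 2) (s / 2) (half_pos hs)
      rwa [volume_axisCube c hs, setLIntegral_axisCube c hs, setLIntegral_axisCube c hs] at this)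
  refine ⟨1 / (q - 1) * (1 + η), ?_, fun R hR => ?_⟩
  · have : 0 < 1 / (q - 1) := by positivity
    nlinarith
  · have h2 := h (fun _ => -R) (2 * R) (by linarith)
    rw [← setLIntegral_axisCube (fun _ => -R) (by linarith : 0 < 2 * R)
      (fun x => ENNReal.ofReal (w x ^ (-(1 / (q - 1)))) ^ (1 + η))] at h2
    refine lt_of_le_of_lt ?_ h2
    refine le_trans (lintegral_mono_ae ?_) (lintegral_mono_set ?_)
    · filter_upwards [ae_restrict_of_ae hw_pos] with x hx
      rw [ENNReal.ofReal_rpow_of_nonneg (Real.rpow_nonneg hx.le _) (by positivity),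
        ← Real.rpow_mul hx.le, neg_mul]
    · intro x hx i
      have h3 := PiLp.norm_apply_le x i
      rw [mem_closedBall_zero_iff] at hx
      simp only [Real.norm_eq_abs] at h3
      change |x i - (-R + 2 * R / 2)| ≤ 2 * R / 2
      rw [show -R + 2 * R / 2 = 0 by ring, sub_zero, show 2 * R / 2 = R by ring]
      exact h3.trans hx

/-- Choice of `ε`: it is taken so that the exponents `1 / (τ (q-ε-1))` and `ε / (ρ (q-ε-1))` of
`u^{-τ}` and `v^{-ρ}` in `(u v^ε)^{-1/(q-ε-1)}` add up to `1`, and Young's inequality applies. -/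
theorem exists_small_exponent {q τ ρ : ℝ} (hq : 1 < q) (hτ : 1 / (q - 1) < τ) (hρ : 0 < ρ) :
    ∃ ε ∈ Set.Ioo (0 : ℝ) (q - 1), ∀ u v : ℝ, 0 < u → 0 < v →
      (u * v ^ ε) ^ (-(1 / (q - ε - 1))) ≤ u ^ (-τ) + v ^ (-ρ) := by
  have hq1 : 0 < q - 1 := by linarith
  have hτ0 : 0 < τ := lt_trans (by positivity) hτ
  have h1 : 1 / τ < q - 1 := by
    rw [div_lt_iff₀ hτ0]
    rwa [div_lt_iff₀ hq1, mul_comm] at hτ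
  have hd : 0 < 1 + 1 / ρ := by positivity
  set ε := (q - 1 - 1 / τ) / (1 + 1 / ρ) with hε
  have hε0 : 0 < ε := div_pos (by linarith) hd
  have hεd : ε * (1 + 1 / ρ) = q - 1 - 1 / τ := div_mul_cancel₀ _ hd.ne'
  have hτ' : 0 < 1 / τ := by positivity
  have hερ : 0 < ε * (1 / ρ) := by positivity
  have hlt : ε < q - 1 := by nlinarith
  have hm : 0 < q - ε - 1 := by linarith
  refine ⟨ε, ⟨hε0, hlt⟩, fun u v hu hv => ?_⟩
  have hsum : 1 / τ / (q - ε - 1) + ε * (1 / ρ) / (q - ε - 1) = 1 := by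
    rw [← add_div, div_eq_one_iff_eq hm.ne']
    linarith
  have hθ1 : 0 ≤ 1 / τ / (q - ε - 1) := by positivity
  have hθ2 : 0 ≤ ε * (1 / ρ) / (q - ε - 1) := by positivity
  have hu' : 0 < u ^ (-τ) := by positivity
  have hv' : 0 < v ^ (-ρ) := by positivity
  have h := Real.geom_mean_le_arith_mean2_weighted hθ1 hθ2 hu'.le hv'.le hsum
  rw [← Real.rpow_mul hu.le, ← Real.rpow_mul hv.le] at h
  rw [Real.mul_rpow hu.le (by positivity), ← Real.rpow_mul hv.le,
    show -(1 / (q - ε - 1)) = -τ * (1 / τ / (q - ε - 1)) by field_simp,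
    show ε * (-τ * (1 / τ / (q - ε - 1))) = -ρ * (ε * (1 / ρ) / (q - ε - 1)) by field_simp]
  refine h.trans ?_
  nlinarith

/-- Hölder's inequality with a weight: `‖f‖₁ ≤ (∫ |f|^p v)^{1/p} (∫ v^{-1/(p-1)})^{(p-1)/p}`. -/
theorem setLIntegral_le_weighted {α : Type*} [MeasurableSpace α] {μ : Measure α} {p : ℝ}
    (hp : 1 < p) {f v : α → ℝ} (hf : Measurable f) (hv : Measurable v)
    (hv0 : ∀ᵐ x ∂μ, 0 < v x) :
    ∫⁻ x, ENNReal.ofReal |f x| ∂μ ≤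
      (∫⁻ x, ENNReal.ofReal |f x| ^ p * ENNReal.ofReal (v x) ∂μ) ^ (1 / p) *
        (∫⁻ x, ENNReal.ofReal (v x ^ (-(1 / (p - 1)))) ∂μ) ^ (1 / (p / (p - 1))) := by
  have hp0 : 0 < p := by linarith
  have hp1 : 0 < p - 1 := by linarith
  have h := ENNReal.lintegral_mul_le_Lp_mul_Lq μ (Real.HolderConjugate.conjExponent hp)
    (f := fun x => ENNReal.ofReal |f x| * ENNReal.ofReal (v x) ^ (1 / p))
    (g := fun x => ENNReal.ofReal (v x) ^ (-(1 / p)))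
    (by fun_prop) (by fun_prop)
  refine le_trans (le_of_eq (lintegral_congr_ae ?_)) (h.trans (le_of_eq ?_))
  · filter_upwards [hv0] with x hx
    have hx' := ENNReal.ofReal_pos.2 hx
    rw [Pi.mul_apply, mul_assoc, ← ENNReal.rpow_add _ _ hx'.ne' ENNReal.ofReal_ne_top,
      add_neg_cancel, ENNReal.rpow_zero, mul_one]
  · congr 2
    · refine lintegral_congr fun x => ?_
      rw [ENNReal.mul_rpow_of_nonneg _ _ hp0.le, ← ENNReal.rpow_mul, one_div_mul_cancel hp0.ne',
        ENNReal.rpow_one]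
    · refine lintegral_congr_ae ?_
      filter_upwards [hv0] with x hx
      rw [← ENNReal.rpow_mul, ENNReal.ofReal_rpow_of_pos hx]
      congr 2
      rw [Real.conjExponent]
      field_simp

/-- The grand Lebesgue norm dominates the `L¹` norm on bounded subsets of `Ω`: for a suitable `ε`, the
term of the supremum with this `ε` already does. -/
theorem exists_grandNorm_bound {n : ℕ} {q : ℝ} (hq : 1 < q)
    {Ω E : Set (EuclideanSpace ℝ (Fin n))} {w a : EuclideanSpace ℝ (Fin n) → ℝ}
    (hw_meas : Measurable w) (hw_pos : ∀ᵐ x ∂volume, 0 < w x)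
    (ha_meas : Measurable a) (ha_pos : ∀ᵐ x ∂volume, 0 < a x)
    {δ : ℝ} (hδ : 0 < δ) (hw : MemAq q w) (ha : MemAq q (fun x => a x ^ δ))
    (hEΩ : E ⊆ Ω) (hE : Bornology.IsBounded E) :
    ∃ C : ℝ≥0∞, C ≠ ⊤ ∧ ∀ f : EuclideanSpace ℝ (Fin n) → ℝ, Measurable f →
      ∫⁻ x in E, ENNReal.ofReal |f x| ≤ C * grandNorm q w a Ω f := by
  obtain ⟨τ, hτ, hwτ⟩ := hw.exists_lintegral_rpow_lt_top hq hw_meas hw_pos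
  obtain ⟨τ', hτ', haτ⟩ := ha.exists_lintegral_rpow_lt_top hq (ha_meas.pow_const δ)
    (ha_pos.mono fun x hx => Real.rpow_pos_of_pos hx δ)
  have hq1 : 0 < q - 1 := by linarith
  have hτ'0 : 0 < τ' := lt_trans (by positivity) hτ'
  obtain ⟨ε, hε, hεle⟩ := exists_small_exponent (ρ := δ * τ') hq hτ (by positivity)
  obtain ⟨R, hR, hER⟩ : ∃ R, 0 < R ∧ E ⊆ closedBall 0 R := by
    obtain ⟨R, hR⟩ := hE.subset_closedBall 0
    exact ⟨max R 1, by positivity, hR.trans (closedBall_subset_closedBall (le_max_left _ _))⟩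
  have hp : 1 < q - ε := by linarith [hε.2]
  have hp0 : 0 < q - ε := by linarith
  have hv_meas : Measurable fun x => w x * a x ^ ε := hw_meas.mul (ha_meas.pow_const ε)
  set D := ∫⁻ x in E, ENNReal.ofReal ((w x * a x ^ ε) ^ (-(1 / (q - ε - 1)))) with hD
  have hDfin : D < ⊤ := by
    calc D ≤ ∫⁻ x in E, (ENNReal.ofReal (w x ^ (-τ)) + ENNReal.ofReal ((a x ^ δ) ^ (-τ'))) := by
          refine lintegral_mono_ae ?_
          filter_upwards [ae_restrict_of_ae hw_pos, ae_restrict_of_ae ha_pos] with x hwx hax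
          rw [← ENNReal.ofReal_add (by positivity) (by positivity)]
          apply ENNReal.ofReal_le_ofReal
          rw [← Real.rpow_mul hax.le, mul_neg]
          exact hεle _ _ hwx hax
      _ ≤ ∫⁻ x in closedBall 0 R,
            (ENNReal.ofReal (w x ^ (-τ)) + ENNReal.ofReal ((a x ^ δ) ^ (-τ'))) :=
          lintegral_mono_set hER
      _ = _ := lintegral_add_left (hw_meas.pow_const _).ennreal_ofReal _
      _ < ⊤ := ENNReal.add_lt_top.2 ⟨hwτ R hR, haτ R hR⟩
  have hεE : ENNReal.ofReal ε ≠ 0 := (ENNReal.ofReal_pos.2 hε.1).ne'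
  refine ⟨(ENNReal.ofReal ε)⁻¹ ^ (1 / (q - ε)) * D ^ (1 / ((q - ε) / (q - ε - 1))), ?_,
    fun f hf => ?_⟩
  · refine ENNReal.mul_ne_top (ENNReal.rpow_ne_top_of_nonneg (by positivity)
      (ENNReal.inv_ne_top.2 hεE)) (ENNReal.rpow_ne_top_of_nonneg ?_ hDfin.ne)
    have : 0 < q - ε - 1 := by linarith
    positivity
  · refine (setLIntegral_le_weighted hp hf hv_meas (ae_restrict_of_ae ?_)).trans ?_
    · filter_upwards [hw_pos, ha_pos] with x hwx hax
      positivity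
    · have h1 : (∫⁻ x in E, ENNReal.ofReal |f x| ^ (q - ε) * ENNReal.ofReal (w x * a x ^ ε))
            ^ (1 / (q - ε)) ≤ (ENNReal.ofReal ε)⁻¹ ^ (1 / (q - ε)) * grandNorm q w a Ω f := by
        calc _ ≤ (∫⁻ x in Ω, ENNReal.ofReal |f x| ^ (q - ε) * ENNReal.ofReal (w x * a x ^ ε))
                  ^ (1 / (q - ε)) :=
              ENNReal.rpow_le_rpow (lintegral_mono_set hEΩ) (by positivity)
          _ = (ENNReal.ofReal ε)⁻¹ ^ (1 / (q - ε)) * (ENNReal.ofReal ε *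
                ∫⁻ x in Ω, ENNReal.ofReal |f x| ^ (q - ε) * ENNReal.ofReal (w x * a x ^ ε))
                  ^ (1 / (q - ε)) := by
              rw [← ENNReal.mul_rpow_of_nonneg _ _ (by positivity), ← mul_assoc,
                ENNReal.inv_mul_cancel hεE ENNReal.ofReal_ne_top, one_mul]
          _ ≤ _ := by
              gcongr
              exact le_iSup₂_of_le ε hε le_rfl
      calc _ ≤ ((ENNReal.ofReal ε)⁻¹ ^ (1 / (q - ε)) * grandNorm q w a Ω f) *
              D ^ (1 / ((q - ε) / (q - ε - 1))) := by gcongr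
        _ = _ := by ring

/-- if `w ∈ A_q` and `a^δ ∈ A_q` for some `δ > 0`, then
`L^{q)}_a(Ω,w) ⊂ L¹_loc(Ω)`, and for every measurable bounded `E ⊂ Ω` there is a
constant `C` (independent of `f`) with `∫_E |f| dx ≤ C ‖f‖_{L^{q)}_a(Ω,w)}`
for all `f ∈ L^{q)}_a(Ω,w)`. -/
theorem grand_lebesgue_loc_integrable {n : ℕ} (q : ℝ) (hq : 1 < q)
    (Ω : Set (EuclideanSpace ℝ (Fin n))) (hΩ : IsOpen Ω)
    (w a : EuclideanSpace ℝ (Fin n) → ℝ)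
    (hw_meas : Measurable w) (hw_pos : ∀ᵐ x ∂volume, 0 < w x)
    (ha_meas : Measurable a) (ha_pos : ∀ᵐ x ∂volume, 0 < a x)
    (hloc : ∀ ε ∈ Set.Ioo (0 : ℝ) (q - 1),
      LocallyIntegrableOn (fun x => w x * a x ^ ε) Ω volume)
    (δ : ℝ) (hδ : 0 < δ)
    (hw : MemAq q w) (ha : MemAq q (fun x => a x ^ δ)) :
    (∀ f : EuclideanSpace ℝ (Fin n) → ℝ, Measurable f → grandNorm q w a Ω f ≠ ⊤ →
      LocallyIntegrableOn f Ω volume) ∧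
    ∀ E : Set (EuclideanSpace ℝ (Fin n)), MeasurableSet E → E ⊆ Ω →
      Bornology.IsBounded E →
      ∃ C : ℝ≥0∞, C ≠ ⊤ ∧
        ∀ f : EuclideanSpace ℝ (Fin n) → ℝ, Measurable f → grandNorm q w a Ω f ≠ ⊤ →
          ∫⁻ x in E, ENNReal.ofReal |f x| ≤ C * grandNorm q w a Ω f := by
  constructor
  · intro f hf hfin x hx
    obtain ⟨C, hC, h⟩ := exists_grandNorm_bound (Ω := Ω) (E := ball x 1 ∩ Ω) hq hw_meas hw_pos
      ha_meas ha_pos hδ hw ha Set.inter_subset_right (isBounded_ball.subset Set.inter_subset_left)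
    refine ⟨ball x 1 ∩ Ω, Filter.inter_mem (mem_nhdsWithin_of_mem_nhds (ball_mem_nhds x one_pos))
      self_mem_nhdsWithin, hf.aestronglyMeasurable, ?_⟩
    rw [hasFiniteIntegral_iff_norm]
    simp only [Real.norm_eq_abs]
    exact (h f hf).trans_lt (ENNReal.mul_lt_top hC.lt_top hfin.lt_top)
  · intro E _ hEΩ hE
    obtain ⟨C, hC, h⟩ := exists_grandNorm_bound hq hw_meas hw_pos ha_meas ha_pos hδ hw ha hEΩ hE
    exact ⟨C, hC, fun f hf _ => h f hf⟩
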